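/- arXiv:2210.12128 — 8 statements merged into one kernel-verified Lean document; each statement's English description precedes it below -/
import Mathlib

section
/- Fix integers m, n ≥ 2. Define vectors D_1, …, D_{mn} ∈ ℕ^{m+n-1}, with coordinates indexed by the symbols s_0, s_1, …, s_{m-1}, t_1, …, t_{n-2}, as follows: D_1 is the zero vector; for 1 ≤ i ≤ m-1, D_{1+i} has s_0-coordinate 0, s_a-coordinate equal to 1 if a ≤ i and 0 otherwise (for 1 ≤ a ≤ m-1), and t_b-coordinate equal to i (for 1 ≤ b ≤ n-2); for 1 ≤ j ≤ n-1, D_{m+j} has s_a-coordinate 1 for every 0 ≤ a ≤ m-1 and t_b-coordinate equal to (m-1) + 1 if b ≤ j-1 and (m-1) otherwise (for 1 ≤ b ≤ n-2); and for 1 ≤ i ≤ m-1, 1 ≤ j ≤ n-1, D_{m+n-1+(i-1)(n-1)+j} = D_{1+i} + D_{m+j}. Then for every coordinate u and all indices 1 ≤ k ≤ k' ≤ mn, the u-th coordinate of D_k is at most the u-th coordinate of D_{k'}. -/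
/-- The `s_a`-coordinate (for `0 ≤ a ≤ m-1`) of the degree vector `D_k`
(`1 ≤ k ≤ m*n`) arising from the variable substitution. -/
def Ds (m n k a : ℕ) : ℕ :=
  if k ≤ 1 then 0
  else if k ≤ m then (if 1 ≤ a ∧ a ≤ k - 1 then 1 else 0)
  else if k ≤ m + n - 1 then 1
  else (if 1 ≤ a ∧ a ≤ (k - m - n) / (n - 1) + 1 then 1 else 0) + 1

/-- The `t_b`-coordinate (for `1 ≤ b ≤ n-2`) of the degree vector `D_k`
(`1 ≤ k ≤ m*n`) arising from the variable substitution. -/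
def Dt (m n k b : ℕ) : ℕ :=
  if k ≤ 1 then 0
  else if k ≤ m then k - 1
  else if k ≤ m + n - 1 then (if b ≤ k - m - 1 then m else m - 1)
  else ((k - m - n) / (n - 1) + 1) + (if b ≤ (k - m - n) % (n - 1) then m else m - 1)

/-!
The list consists of the blocks `1`, then the `x_i`, then the `y_j`, then the products `x_i y_j`.
Every exponent is visibly monotone inside each of the first three blocks, and at each junction
after the entry `1` a single bound separates the two sides: `1` for `s_a`; `m - 1` and then `m`
for `t_b`. In the last block `i - 1` and `j - 1` are the quotient and the remainder of the position
by `n - 1`. The exponent of `s_a` there depends on `i` only. When `j` falls back from `n - 1`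
to `1`, the exponent of `t_b` in `y_j` drops by at most one, and the simultaneous passage from `x_i`
to `x_{i+1}` makes up for it.
-/

theorem monotone_ite_le {α β : Type*} [Preorder α] [DecidableLE α] [Preorder β] {f g : α → β}
    {c : α} (hf : Monotone f) (hg : Monotone g) (hfg : ∀ x y, x ≤ c → ¬y ≤ c → f x ≤ g y) :
    Monotone fun x => if x ≤ c then f x else g x := by
  intro x y hxy
  change (if x ≤ c then f x else g x) ≤ if y ≤ c then f y else g y
  split_ifs with hx hy hy
  · exact hf hxy
  · exact hfg x y hx hy
  · exact absurd (hxy.trans hy) hx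
  · exact hg hxy

theorem monotone_div_add_mod {f : ℕ → ℕ} (hf : Monotone f) (hdrop : ∀ r r', f r ≤ f r' + 1)
    (d : ℕ) : Monotone fun p => p / d + f (p % d) := by
  intro p p' hpp'
  change p / d + f (p % d) ≤ p' / d + f (p' % d)
  rcases (Nat.div_le_div_right (c := d) hpp').lt_or_eq with hlt | heq
  · calc p / d + f (p % d) ≤ p / d + (f (p' % d) + 1) := by gcongr; exact hdrop _ _
      _ = (p / d + 1) + f (p' % d) := by ring
      _ ≤ p' / d + f (p' % d) := by gcongr; exact hlt
  · have hmod : p % d ≤ p' % d := by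
      have hp := Nat.div_add_mod p d
      have hp' := Nat.div_add_mod p' d
      rw [heq] at hp
      omega
    exact add_le_add heq.le (hf hmod)

/-- The exponent of `s_a` in the monomial `x_i`. -/
def xDegS (a i : ℕ) : ℕ := if 1 ≤ a ∧ a ≤ i then 1 else 0

/-- The exponent of `t_b` in the monomial `y_{r+1}`; the index is shifted so that `r` is the
remainder locating a product `x_i y_{r+1}` within its row. -/
def yDegT (m b r : ℕ) : ℕ := if b ≤ r then m else m - 1

theorem xDegS_le_one (a i : ℕ) : xDegS a i ≤ 1 := by
  unfold xDegS; split_ifs <;> omega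

theorem xDegS_monotone (a : ℕ) : Monotone (xDegS a) := by
  intro i i' hii'
  unfold xDegS
  split_ifs <;> omega

theorem yDegT_le (m b r : ℕ) : yDegT m b r ≤ m := by
  unfold yDegT; split_ifs <;> omega

theorem sub_one_le_yDegT (m b r : ℕ) : m - 1 ≤ yDegT m b r := by
  unfold yDegT; split_ifs <;> omega

theorem yDegT_le_add_one (m b r r' : ℕ) : yDegT m b r ≤ yDegT m b r' + 1 :=
  (yDegT_le m b r).trans (Nat.le_add_of_sub_le (sub_one_le_yDegT m b r'))

theorem yDegT_monotone (m b : ℕ) : Monotone (yDegT m b) := by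
  intro r r' hrr'
  unfold yDegT
  split_ifs <;> omega

theorem Ds_eq_ite_xDegS (m n k a : ℕ) :
    Ds m n k a =
      if k ≤ 1 then 0
      else if k ≤ m then xDegS a (k - 1)
      else if k ≤ m + n - 1 then 1
      else xDegS a ((k - m - n) / (n - 1) + 1) + 1 :=
  rfl

theorem Dt_eq_ite_yDegT (m n k b : ℕ) :
    Dt m n k b =
      if k ≤ 1 then 0
      else if k ≤ m then k - 1
      else if k ≤ m + n - 1 then yDegT m b (k - m - 1)
      else (k - m - n) / (n - 1) + 1 + yDegT m b ((k - m - n) % (n - 1)) :=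
  rfl

theorem sub_sub_monotone (m n : ℕ) : Monotone fun k : ℕ => k - m - n :=
  fun _ _ h => Nat.sub_le_sub_right (Nat.sub_le_sub_right h m) n

theorem Ds_monotone (m n a : ℕ) : Monotone fun k => Ds m n k a := by
  simp only [Ds_eq_ite_xDegS]
  have hx : Monotone fun k => xDegS a (k - 1) :=
    (xDegS_monotone a).comp fun _ _ h => Nat.sub_le_sub_right h 1
  have hrow : Monotone fun k => (k - m - n) / (n - 1) + 1 :=
    fun _ _ h => Nat.succ_le_succ (Nat.div_le_div_right (sub_sub_monotone m n h))
  have hxy : Monotone fun k => xDegS a ((k - m - n) / (n - 1) + 1) + 1 :=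
    ((xDegS_monotone a).comp hrow).add_const 1
  refine monotone_ite_le monotone_const (monotone_ite_le hx
    (monotone_ite_le monotone_const hxy ?y_le_xy) ?x_le_tail) fun _ _ _ _ => Nat.zero_le _
  case y_le_xy => exact fun _ _ _ _ => Nat.le_add_left 1 _
  case x_le_tail =>
    intro k k' _ _
    refine (xDegS_le_one a (k - 1)).trans ?_
    split
    · exact le_rfl
    · exact Nat.le_add_left 1 _

theorem Dt_monotone (m n b : ℕ) : Monotone fun k => Dt m n k b := by
  simp only [Dt_eq_ite_yDegT]
  have hx : Monotone fun k : ℕ => k - 1 := fun _ _ h => Nat.sub_le_sub_right h 1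
  have hy : Monotone fun k => yDegT m b (k - m - 1) :=
    (yDegT_monotone m b).comp (sub_sub_monotone m 1)
  have hxy : Monotone fun k =>
      (k - m - n) / (n - 1) + 1 + yDegT m b ((k - m - n) % (n - 1)) := by
    simpa only [Function.comp_def, add_right_comm] using
      ((monotone_div_add_mod (yDegT_monotone m b) (yDegT_le_add_one m b) (n - 1)).comp
        (sub_sub_monotone m n)).add_const 1
  refine monotone_ite_le monotone_const (monotone_ite_le hx
    (monotone_ite_le hy hxy ?y_le_xy) ?x_le_tail) fun _ _ _ _ => Nat.zero_le _
  case y_le_xy =>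
    intro k k' _ _
    have hy_le : yDegT m b (k - m - 1) ≤ m := yDegT_le m b _
    have hle_y : m - 1 ≤ yDegT m b ((k' - m - n) % (n - 1)) := sub_one_le_yDegT m b _
    lia
  case x_le_tail =>
    intro k k' hk _
    refine (Nat.sub_le_sub_right hk 1).trans ?_
    split
    · exact sub_one_le_yDegT m b _
    · exact le_add_left (sub_one_le_yDegT m b _)

/-- Proposition 2.1: the exponent of each variable `s_0, …, s_{m-1}, t_1, …, t_{n-2}`
is nondecreasing along the list `1, x_1, …, x_{m-1}, y_1, …, y_{n-1}, x_1y_1, …, x_{m-1}y_{n-1}`. -/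
theorem degree_vectors_monotone (m n : ℕ) (hm : 2 ≤ m) (hn : 2 ≤ n)
    (k k' : ℕ) (hk : 1 ≤ k) (hkk' : k ≤ k') (hk' : k' ≤ m * n) :
    (∀ a : ℕ, a ≤ m - 1 → Ds m n k a ≤ Ds m n k' a) ∧
    (∀ b : ℕ, 1 ≤ b → b ≤ n - 2 → Dt m n k b ≤ Dt m n k' b) :=
  ⟨fun a _ => Ds_monotone m n a hkk', fun b _ _ => Dt_monotone m n b hkk'⟩
end

section
/- Let A be a d × K matrix with nonnegative integer entries such that every standard basis vector e_1, …, e_d of ℕ^d appears as a column of A and every column of A is nonzero. Then for all vectors a, b ∈ ℕ^d with b_i ≤ a_i for every 1 ≤ i ≤ d, the number of x ∈ ℕ^K with A x = b is at most the number of x ∈ ℕ^K with A x = a. (Both solution sets are finite under these hypotheses.) -/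
/-!
If `A y = a - b`, then translation by `y` injects the solutions of `A x = b` into those of
`A x = a`, and the latter are finite in number because every coordinate of a solution is bounded by
some entry of `a`. Such a `y` exists because the basis vectors among the columns of `A` make it
surjective.
-/

open Matrix

theorem card_fiber_le_card_fiber_add_map {M N F : Type*} [Add M] [IsRightCancelAdd M] [Add N]
    [FunLike F M N] [AddHomClass F M N] (f : F) (b : N) (y : M)
    [Finite {x // f x = b + f y}] :
    Nat.card {x // f x = b} ≤ Nat.card {x // f x = b + f y} :=
  Finite.card_le_of_embedding <|
    (addRightEmbedding y).subtypeMap fun x (hx : f x = b) ↦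
      show f (x + y) = b + f y by rw [map_add, hx]

theorem mulVec_surjective_of_forall_exists_col_eq_single {m n R : Type*} [Finite m]
    [DecidableEq m] [Fintype n] [Semiring R] {A : Matrix m n R}
    (hbasis : ∀ i, ∃ j, A.col j = Pi.single i 1) : Function.Surjective A.mulVec := by
  classical
  choose σ hσ using hbasis
  have hright : A * (1 : Matrix n n R).submatrix (Equiv.refl n) σ = 1 := by
    ext i k
    rw [mul_submatrix_one (Equiv.refl n) σ A, one_eq_pi_single, Pi.single_comm, ← hσ k]
    rfl
  exact mulVec_surjective_iff_exists_right_inverse.mpr ⟨_, hright⟩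

section NatMatrix

variable {m n : Type*} [Fintype n] {A : Matrix m n ℕ}

theorem le_mulVec_of_ne_zero {i : m} {j : n} (hij : A i j ≠ 0) (x : n → ℕ) :
    x j ≤ (A *ᵥ x) i :=
  calc
    x j ≤ A i j * x j := Nat.le_mul_of_pos_left _ (Nat.pos_of_ne_zero hij)
    _ ≤ ∑ k, A i k * x k :=
      Finset.single_le_sum (f := fun k ↦ A i k * x k) (fun _ _ ↦ Nat.zero_le _)
        (Finset.mem_univ j)

theorem finite_setOf_mulVec_eq (hcol : ∀ j, ∃ i, A i j ≠ 0) (b : m → ℕ) :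
    {x | A *ᵥ x = b}.Finite := by
  classical
  choose τ hτ using hcol
  refine (Set.finite_Iic (b ∘ τ)).subset ?_
  rintro x rfl j
  exact le_mulVec_of_ne_zero (hτ j) x

theorem vpf_dominance_general (hcol : ∀ j, ∃ i, A i j ≠ 0) (b : m → ℕ) (y : n → ℕ) :
    Nat.card {x // A *ᵥ x = b} ≤ Nat.card {x // A *ᵥ x = b + A *ᵥ y} :=
  have : Finite {x // A.mulVecLin x = b + A.mulVecLin y} := finite_setOf_mulVec_eq hcol _
  card_fiber_le_card_fiber_add_map A.mulVecLin b y

end NatMatrix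

/-- Lemma 4.1 (dominance): for a matrix `A` with nonnegative integer entries whose columns
include every standard basis vector and are all nonzero, if `b ≤ a` coordinatewise then
`p_A(b) ≤ p_A(a)`. -/
theorem vpf_dominance (d K : ℕ) (A : Matrix (Fin d) (Fin K) ℕ)
    (hbasis : ∀ i : Fin d, ∃ j : Fin K, (fun i' => A i' j) = Pi.single i 1)
    (hcol : ∀ j : Fin K, ∃ i : Fin d, A i j ≠ 0)
    (a b : Fin d → ℕ) (hba : ∀ i, b i ≤ a i) :
    Nat.card {x : Fin K → ℕ // A.mulVec x = b} ≤
      Nat.card {x : Fin K → ℕ // A.mulVec x = a} := by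
  obtain ⟨y, hy⟩ := mulVec_surjective_of_forall_exists_col_eq_single hbasis (a - b)
  simpa only [hy, add_tsub_cancel_of_le (show b ≤ a from hba)] using
    vpf_dominance_general hcol b y
end

section
/- Let A be a d × K matrix with nonnegative integer entries such that every standard basis vector e_1, …, e_d appears as a column of A and every column of A is nonzero. Let c ∈ ℤ^d and let v₁, v₂ ∈ ℤ^d satisfy v₂_i ≤ v₁_i for every 1 ≤ i ≤ d. Then the number of x ∈ ℕ^K with A x = c − v₁ is at most the number of x ∈ ℕ^K with A x = c − v₂. -/
/-!
Since the standard basis vectors are columns of `A`, the nonnegative vector `v₁ - v₂` equals `A w`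
for some `w ∈ ℕ^K`, and `x ↦ x + w` embeds the solutions of `A x = c - v₁` into those of
`A x = c - v₂`. As `A` is nonnegative without zero columns, the latter are finite in number, so the
embedding does compare cardinalities: `Nat.card` of an infinite type is `0`.
-/

theorem natCard_fiber_le_natCard_fiber_add_map {F M N : Type*} [Add M] [IsRightCancelAdd M] [Add N]
    [FunLike F M N] [AddHomClass F M N] (f : F) (b : N) (w : M) [Finite {x // f x = b + f w}] :
    Nat.card {x // f x = b} ≤ Nat.card {x // f x = b + f w} := by
  let translate (x : {x // f x = b}) : {x // f x = b + f w} :=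
    ⟨x + w, by rw [map_add, x.property]⟩
  have translate_injective : Function.Injective translate := fun _ _ h =>
    Subtype.ext (add_right_cancel (congrArg Subtype.val h))
  exact Nat.card_le_card_of_injective translate translate_injective

section NatMulVec

variable {m n R : Type*} [Fintype n] [NonAssocSemiring R]

/-- The map `x ↦ A x` on vectors of natural numbers, as an additive homomorphism. The cardinality
of its fibre over `b` is the vector partition function `p_A(b)`. -/
def natMulVec (A : Matrix m n R) : (n → ℕ) →+ (m → R) where
  toFun x := A.mulVec fun j => (x j : R)
  map_zero' := by simp only [Pi.zero_apply, Nat.cast_zero]; exact A.mulVec_zero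
  map_add' x y := by simp only [Pi.add_apply, Nat.cast_add]; exact A.mulVec_add _ _

theorem natMulVec_apply (A : Matrix m n R) (x : n → ℕ) (i : m) :
    natMulVec A x i = ∑ j, x j • A i j := by
  simp [natMulVec, Matrix.mulVec, dotProduct, nsmul_eq_mul, Nat.cast_comm]

theorem natMulVec_single [DecidableEq n] (A : Matrix m n R) (j : n) (k : ℕ) :
    natMulVec A (Pi.single j k) = k • A.col j := by
  ext i
  simp [natMulVec_apply, Pi.single_apply, ite_smul]

theorem exists_natMulVec_eq_natCast [Finite m] [DecidableEq m] {A : Matrix m n R}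
    (hbasis : ∀ i, ∃ j, A.col j = Pi.single i 1) (a : m → ℕ) :
    ∃ w, natMulVec A w = fun i => (a i : R) := by
  classical
  cases nonempty_fintype m
  choose σ hσ using hbasis
  refine ⟨∑ i, Pi.single (σ i) (a i), ?_⟩
  calc natMulVec A (∑ i, Pi.single (σ i) (a i))
      = ∑ i, a i • Pi.single i (1 : R) := by simp only [map_sum, natMulVec_single, hσ]
    _ = ∑ i, Pi.single i (a i : R) := by simp only [← Pi.single_smul, nsmul_one]
    _ = fun i => (a i : R) := Finset.univ_sum_single _

variable [PartialOrder R] {A : Matrix m n R}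

theorem nsmul_le_natMulVec [IsOrderedAddMonoid R] {i : m} (hA : ∀ j, 0 ≤ A i j)
    (x : n → ℕ) (j : n) : x j • A i j ≤ natMulVec A x i := by
  rw [natMulVec_apply]
  exact Finset.single_le_sum (f := fun k => x k • A i k) (fun k _ => nsmul_nonneg (hA k) (x k))
    (Finset.mem_univ j)

theorem finite_natMulVec_fiber [IsOrderedCancelAddMonoid R] [Archimedean R]
    (hA : ∀ i j, 0 ≤ A i j) (hcol : ∀ j, ∃ i, A i j ≠ 0) (b : m → R) :
    Finite {x // natMulVec A x = b} := by
  classical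
  choose τ hτ using hcol
  have pos (j : n) : 0 < A (τ j) j := (hA (τ j) j).lt_of_ne' (hτ j)
  choose N hN using fun j => Archimedean.arch (b (τ j)) (pos j)
  refine ((Set.finite_Iic N).subset fun x hx j => ?_).to_subtype
  have bound : x j • A (τ j) j ≤ N j • A (τ j) j :=
    calc x j • A (τ j) j ≤ natMulVec A x (τ j) := nsmul_le_natMulVec (hA (τ j)) x j
      _ = b (τ j) := congrFun hx (τ j)
      _ ≤ N j • A (τ j) j := hN j
  exact (nsmul_left_strictMono (pos j)).le_iff_le.mp bound

end NatMulVec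

/-- Lemma 4.2: if `v₂ ≤ v₁` coordinatewise, then `p_A(c - v₁) ≤ p_A(c - v₂)`, for a matrix
`A` with nonnegative integer entries whose columns include every standard basis vector and
are all nonzero. -/
theorem vpf_shift_dominance (d K : ℕ) (A : Matrix (Fin d) (Fin K) ℤ)
    (hA : ∀ i j, 0 ≤ A i j)
    (hbasis : ∀ i : Fin d, ∃ j : Fin K, (fun i' => A i' j) = Pi.single i 1)
    (hcol : ∀ j : Fin K, ∃ i : Fin d, A i j ≠ 0)
    (c v₁ v₂ : Fin d → ℤ) (hv : ∀ i, v₂ i ≤ v₁ i) :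
    Nat.card {x : Fin K → ℕ // A.mulVec (fun j => (x j : ℤ)) = c - v₁} ≤
      Nat.card {x : Fin K → ℕ // A.mulVec (fun j => (x j : ℤ)) = c - v₂} := by
  obtain ⟨w, hw⟩ := exists_natMulVec_eq_natCast hbasis fun i => (v₁ i - v₂ i).toNat
  have target_eq : c - v₂ = c - v₁ + natMulVec A w := by
    ext i
    simp only [hw, Pi.add_apply, Pi.sub_apply, Int.toNat_sub_of_le (hv i), sub_add_sub_cancel]
  have := finite_natMulVec_fiber hA hcol (c - v₁ + natMulVec A w)
  rw [target_eq]
  exact natCard_fiber_le_natCard_fiber_add_map (natMulVec A) (c - v₁) w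
end

section
/- For all integers m ≥ 1, n ≥ 3, and v with 1 ≤ v ≤ n−2, the following identity holds in ℚ: (1/12)(8n²m² − 6vnm + 5n²m − 10nm² + 6v² − 12vn + 6vm − 19nm + 2m² + 18v + 14m)(m − 1) + C(m, 3) + (m−1)·C(n−1, 2) + C(n−v−1, 2) = Σ_{i=2}^{m} (i−1)(mn − i) + (m−1)·Σ_{i=m+1}^{m+v} (mn − i) + m·Σ_{i=m+v+1}^{m+n−1} (mn − i) + Σ_{i=1}^{m−1} Σ_{j=1}^{v} (i + m − 1)(mn − m − i(n−1) − j) + Σ_{i=1}^{m−1} Σ_{j=v+1}^{n−1} (i + m)(mn − m − i(n−1) − j). Here C(a,k) denotes a binomial coefficient. -/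
open Finset

/-!
Put `k = n - 1 - v`, the number of indices `j` with `v + 1 ≤ j ≤ n - 1`. Every sum on the right
adds up products of affine functions of the index over intervals of length `m - 1`, `v` or `k`,
so the closed forms for `∑ i` and `∑ i ^ 2` turn both sides into polynomials in `m - 1`, `v` and
`k`, and these agree.
-/

section ClosedForms

variable {K : Type*} [Field K] [CharZero K]

theorem cast_choose_three (a : ℕ) : (a.choose 3 : K) = a * (a - 1) * (a - 2) / 6 := by
  rw [Nat.cast_choose_eq_descPochhammer_div]
  simp [descPochhammer_succ_right, Nat.factorial]

theorem sum_Icc_one_cast (a : ℕ) : ∑ i ∈ Icc 1 a, (i : K) = a * (a + 1) / 2 := by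
  induction a with
  | zero => simp
  | succ a ih =>
    rw [sum_Icc_succ_top (by lia), ih]
    push_cast
    ring

theorem sum_Icc_one_cast_sq (a : ℕ) :
    ∑ i ∈ Icc 1 a, (i : K) ^ 2 = a * (a + 1) * (2 * a + 1) / 6 := by
  induction a with
  | zero => simp
  | succ a ih =>
    rw [sum_Icc_succ_top (by lia), ih]
    push_cast
    ring

theorem sum_Icc_add_mul_sub_mul (p q r : K) (a : ℕ) :
    ∑ i ∈ Icc 1 a, ((i : K) + p) * (q - i * r) =
      a * (p * q) + (q - p * r) * (a * (a + 1) / 2) -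
        r * (a * (a + 1) * (2 * a + 1) / 6) := by
  calc ∑ i ∈ Icc 1 a, ((i : K) + p) * (q - i * r)
      = ∑ i ∈ Icc 1 a, (p * q + (q - p * r) * i - r * (i : K) ^ 2) :=
        sum_congr rfl fun i _ => by ring
    _ = a * (p * q) + (q - p * r) * ∑ i ∈ Icc 1 a, (i : K) - r * ∑ i ∈ Icc 1 a, (i : K) ^ 2 := by
        simp [sum_sub_distrib, sum_add_distrib, mul_sum]
    _ = _ := by rw [sum_Icc_one_cast, sum_Icc_one_cast_sq]

theorem sum_Icc_two_sub_one_mul_sub (x : K) (m : ℕ) :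
    ∑ i ∈ Icc 2 m, ((i : K) - 1) * (x - i) =
      (x - 1) * (m * (m - 1) / 2) - m * (m - 1) * (2 * m - 1) / 6 := by
  -- The term `i = 1` vanishes, so the sum may start there.
  have start_at_one : ∑ i ∈ Icc 2 m, ((i : K) - 1) * (x - i) =
      ∑ i ∈ Icc 1 m, ((i : K) + -1) * (x - i * 1) := by
    simp only [← sub_eq_add_neg, mul_one]
    refine sum_subset (Icc_subset_Icc_left one_le_two) fun i hi hi' => ?_
    obtain rfl : i = 1 := by
      simp only [mem_Icc] at hi hi'
      lia
    simp
  rw [start_at_one, sum_Icc_add_mul_sub_mul]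
  ring

theorem sum_Icc_sub_cast (x : K) (b k : ℕ) :
    ∑ j ∈ Icc (b + 1) (b + k), (x - j) = k * (x - b - (k + 1) / 2) := by
  induction k with
  | zero => simp
  | succ k ih =>
    rw [← add_assoc, sum_Icc_succ_top (by lia), ih]
    push_cast
    ring

theorem sum_Icc_sum_Icc_add_mul_sub (p x r : K) (a b k : ℕ) :
    ∑ i ∈ Icc 1 a, ∑ j ∈ Icc (b + 1) (b + k), ((i : K) + p) * (x - i * r - j) =
      k * (a * (p * (x - b - (k + 1) / 2)) +
        (x - b - (k + 1) / 2 - p * r) * (a * (a + 1) / 2) -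
          r * (a * (a + 1) * (2 * a + 1) / 6)) := by
  rw [← sum_Icc_add_mul_sub_mul, mul_sum]
  refine sum_congr rfl fun i _ => ?_
  rw [← mul_sum, sum_Icc_sub_cast]
  ring

end ClosedForms

/-- The constant term of each `t`-coordinate of the vector partition function input
`b^{m,n}(λ,μ,ν; Id)` vanishes: `β_v + C(m,3) + (m-1)C(n-1,2) + C(n-v-1,2)` equals the
weighted sum of staircase entries `δ_i = mn - i` over the index ranges of `l_t(λ; Id)_v`. -/
theorem t_constant_terms_vanish (m n v : ℕ) (hm : 1 ≤ m) (hn : 3 ≤ n)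
    (hv1 : 1 ≤ v) (hv2 : v ≤ n - 2) :
    ((1 : ℚ) / 12) * (8 * (n : ℚ) ^ 2 * (m : ℚ) ^ 2 - 6 * v * n * m
          + 5 * (n : ℚ) ^ 2 * m - 10 * n * (m : ℚ) ^ 2 + 6 * (v : ℚ) ^ 2
          - 12 * v * n + 6 * v * m - 19 * n * m + 2 * (m : ℚ) ^ 2
          + 18 * v + 14 * m) * ((m : ℚ) - 1)
        + (Nat.choose m 3 : ℚ) + ((m : ℚ) - 1) * (Nat.choose (n - 1) 2 : ℚ)
        + (Nat.choose (n - v - 1) 2 : ℚ)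
      = ∑ i ∈ Finset.Icc 2 m, ((i : ℚ) - 1) * (((m * n : ℕ) : ℚ) - (i : ℚ))
        + ((m : ℚ) - 1) * ∑ i ∈ Finset.Icc (m + 1) (m + v), (((m * n : ℕ) : ℚ) - (i : ℚ))
        + (m : ℚ) * ∑ i ∈ Finset.Icc (m + v + 1) (m + n - 1), (((m * n : ℕ) : ℚ) - (i : ℚ))
        + ∑ i ∈ Finset.Icc 1 (m - 1), ∑ j ∈ Finset.Icc 1 v,
            ((i : ℚ) + m - 1) * (((m * n : ℕ) : ℚ) - m - i * ((n : ℚ) - 1) - j)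
        + ∑ i ∈ Finset.Icc 1 (m - 1), ∑ j ∈ Finset.Icc (v + 1) (n - 1),
            ((i : ℚ) + m) * (((m * n : ℕ) : ℚ) - m - i * ((n : ℚ) - 1) - j) := by
  obtain ⟨a, rfl⟩ : ∃ a, m = a + 1 := Nat.exists_eq_add_of_le' hm
  obtain ⟨k, rfl⟩ : ∃ k, n = v + k + 1 := ⟨n - v - 1, by lia⟩
  have card_second_block : v + k + 1 - v - 1 = k := by lia
  have top_index : a + 1 + (v + k + 1) - 1 = a + 1 + v + k := by lia
  have first_block (p x r : ℚ) := sum_Icc_sum_Icc_add_mul_sub p x r a 0 v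
  simp only [zero_add] at first_block
  simp only [card_second_block, top_index, Nat.add_sub_cancel, add_sub_assoc (_ : ℚ) _ (1 : ℚ)]
  rw [cast_choose_three, Nat.cast_choose_two, Nat.cast_choose_two, sum_Icc_two_sub_one_mul_sub,
    sum_Icc_sub_cast, sum_Icc_sub_cast, first_block, sum_Icc_sum_Icc_add_mul_sub]
  push_cast
  ring
end

section
/- Let m, n be positive integers and let λ, μ, ν be partitions of the same positive integer N with at most mn, m, n parts respectively (padded with zeros, so λ = (λ_1 ≥ … ≥ λ_{mn} ≥ 0), μ = (μ_1 ≥ … ≥ μ_m ≥ 0), ν = (ν_1 ≥ … ≥ ν_n ≥ 0) and Σλ_i = Σμ_i = Σν_j = N). Then the following system of m + n − 2 equations holds: (i) Σ_{j=2}^{n} ν_j = Σ_{i=m+1}^{mn} λ_i; (ii) for every u with 1 ≤ u ≤ m−1: Σ_{i=u+1}^{m} μ_i + Σ_{j=2}^{n} ν_j = Σ_{i=u+1}^{m+u(n−1)} λ_i + 2·Σ_{i=m+u(n−1)+1}^{mn} λ_i; (iii) for every v with 1 ≤ v ≤ n−2: Σ_{i=2}^{m} (i−1)μ_i + (m−1)·Σ_{j=2}^{v+1}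 ν_j + m·Σ_{j=v+2}^{n} ν_j = Σ_{i=2}^{m} (i−1)λ_i + (m−1)·Σ_{i=m+1}^{m+v} λ_i + m·Σ_{i=m+v+1}^{m+n−1} λ_i + Σ_{i=1}^{m−1} Σ_{j=1}^{v} (i+m−1)·λ_{m+i(n−1)+j} + Σ_{i=1}^{m−1} Σ_{j=v+1}^{n−1} (i+m)·λ_{m+i(n−1)+j}; if and only if: μ_u = λ_u + Σ_{i=m+(u−1)(n−1)+1}^{m+u(n−1)} λ_i for every 1 ≤ u ≤ m, ν_1 = Σ_{i=1}^{m} λ_i, and ν_v = Σ_{i=0}^{m−1} λ_{m+(n−1)i+v−1} for every 2 ≤ v ≤ n. -/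
open Finset

/-!
Arrange the parts of `λ` in an `m × n` array `A` whose first column is `λ_1, …, λ_m` and whose
other columns contain `λ_{m+1}, …, λ_{mn}`, read row by row. The explicit formulas say that `μ` and
`ν` are the row and column sums `r`, `c` of `A`. The right-hand sides of (i)–(iii) are what the
left-hand sides become when `(μ, ν)` is replaced by `(r, c)`, and these left-hand sides are linear
forms which, together with the totals `Σ μ_i` and `Σ ν_j`, determine all the parts: (i) and (ii)
give the tail sums of `μ`, and then (iii) gives the tail sums of `ν`.
-/

section IntervalSums

variable {M : Type*} [AddCommMonoid M] (f : ℕ → M)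

theorem sum_Icc_add_right (a b c : ℕ) :
    ∑ i ∈ Icc (a + c) (b + c), f i = ∑ i ∈ Icc a b, f (i + c) := by
  rw [← map_add_right_Icc, sum_map]
  rfl

theorem sum_Icc_add_left (a b c : ℕ) :
    ∑ i ∈ Icc (c + a) (c + b), f i = ∑ i ∈ Icc a b, f (c + i) := by
  simpa only [add_comm c] using sum_Icc_add_right f a b c

theorem sum_Icc_consecutive {a b c : ℕ} (hab : a ≤ b + 1) (hbc : b ≤ c) :
    ∑ i ∈ Icc a b, f i + ∑ i ∈ Icc (b + 1) c, f i = ∑ i ∈ Icc a c, f i := by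
  simpa only [Ico_add_one_right_eq_Icc] using
    sum_Ico_consecutive f hab (Nat.add_le_add_right hbc 1)

theorem pred_nsmul_sum_add_nsmul_sum {m a b c : ℕ} (hm : 1 ≤ m) (hab : a ≤ b + 1)
    (hbc : b ≤ c) :
    (m - 1) • ∑ j ∈ Icc a b, f j + m • ∑ j ∈ Icc (b + 1) c, f j
      = (m - 1) • ∑ j ∈ Icc a c, f j + ∑ j ∈ Icc (b + 1) c, f j := by
  obtain ⟨p, rfl⟩ := Nat.exists_eq_add_of_le' hm
  rw [← sum_Icc_consecutive f hab hbc, Nat.add_sub_cancel, succ_nsmul, nsmul_add, add_assoc]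

theorem add_sum_Icc_add_one {a b : ℕ} (hab : a ≤ b) :
    f a + ∑ i ∈ Icc (a + 1) b, f i = ∑ i ∈ Icc a b, f i := by
  rw [Icc_add_one_left_eq_Ioc, add_sum_Ioc_eq_sum_Icc hab]

theorem sum_Icc_sum_Icc_of_monotone {g : ℕ → ℕ} (hg : Monotone g) {u w : ℕ} (huw : u ≤ w) :
    ∑ i ∈ Icc (u + 1) w, ∑ j ∈ Icc (g (i - 1) + 1) (g i), f j
      = ∑ j ∈ Icc (g u + 1) (g w), f j := by
  induction w, huw using Nat.le_induction with
  | base => simp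
  | succ w huw ih =>
    rw [sum_Icc_succ_top (by lia), ih, Nat.add_sub_cancel,
      sum_Icc_consecutive f (Nat.add_le_add_right (hg huw) 1) (hg w.le_succ)]

end IntervalSums

section Triangularity

variable {M : Type*} [AddCancelCommMonoid M]

theorem forall_sum_Icc_add_one_eq_iff {f g : ℕ → M} {a b : ℕ}
    (hfg : ∑ i ∈ Icc a b, f i = ∑ i ∈ Icc a b, g i) :
    (∀ u, a ≤ u → u < b → ∑ i ∈ Icc (u + 1) b, f i = ∑ i ∈ Icc (u + 1) b, g i)
      ↔ ∀ u, a ≤ u → u ≤ b → f u = g u := by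
  refine ⟨fun htail u hau hub ↦ ?_, fun heq u hau _ ↦
    sum_congr rfl fun i hi ↦ heq i (by grind) (by grind)⟩
  have htail_here : ∑ i ∈ Icc u b, f i = ∑ i ∈ Icc u b, g i := by
    obtain rfl | hlt := hau.eq_or_lt
    · exact hfg
    · simpa only [Nat.sub_add_cancel (Nat.one_le_of_lt hlt)] using
        htail (u - 1) (by lia) (by lia)
  have htail_next : ∑ i ∈ Icc (u + 1) b, f i = ∑ i ∈ Icc (u + 1) b, g i := by
    obtain rfl | hlt := hub.eq_or_lt
    · simp
    · exact htail u hau hlt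
  rw [← add_sum_Icc_add_one f hub, ← add_sum_Icc_add_one g hub, htail_next] at htail_here
  exact add_right_cancel htail_here

theorem linear_forms_eq_iff_forall_eq {m n : ℕ} (hm : 1 ≤ m) (hn : 1 ≤ n) {x x' y y' : ℕ → M}
    (hx : ∑ i ∈ Icc 1 m, x i = ∑ i ∈ Icc 1 m, x' i)
    (hy : ∑ j ∈ Icc 1 n, y j = ∑ j ∈ Icc 1 n, y' j) :
    ((∑ j ∈ Icc 2 n, y j = ∑ j ∈ Icc 2 n, y' j) ∧
     (∀ u, 1 ≤ u → u ≤ m - 1 →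
        ∑ i ∈ Icc (u + 1) m, x i + ∑ j ∈ Icc 2 n, y j
          = ∑ i ∈ Icc (u + 1) m, x' i + ∑ j ∈ Icc 2 n, y' j) ∧
     (∀ v, 1 ≤ v → v ≤ n - 2 →
        ∑ i ∈ Icc 2 m, (i - 1) • x i
            + (m - 1) • ∑ j ∈ Icc 2 (v + 1), y j + m • ∑ j ∈ Icc (v + 2) n, y j
          = ∑ i ∈ Icc 2 m, (i - 1) • x' i
            + (m - 1) • ∑ j ∈ Icc 2 (v + 1), y' j + m • ∑ j ∈ Icc (v + 2) n, y' j))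
    ↔ ((∀ u, 1 ≤ u → u ≤ m → x u = x' u) ∧ y 1 = y' 1 ∧ ∀ v, 2 ≤ v → v ≤ n → y v = y' v) := by
  constructor
  · rintro ⟨htail, hrows, hcols⟩
    have hx_eq : ∀ u, 1 ≤ u → u ≤ m → x u = x' u :=
      (forall_sum_Icc_add_one_eq_iff hx).1 fun u hu hum ↦
        add_right_cancel (htail ▸ hrows u hu (by lia))
    have hweighted : ∑ i ∈ Icc 2 m, (i - 1) • x i = ∑ i ∈ Icc 2 m, (i - 1) • x' i :=
      sum_congr rfl fun i hi ↦ by rw [hx_eq i (by grind) (by grind)]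
    have hy_tail : ∀ v, 2 ≤ v → v < n →
        ∑ j ∈ Icc (v + 1) n, y j = ∑ j ∈ Icc (v + 1) n, y' j := by
      intro v hv hvn
      have hcol := hcols (v - 1) (by lia) (by lia)
      rw [show v - 1 + 2 = v + 1 by lia, show v - 1 + 1 = v by lia, hweighted, add_assoc, add_assoc,
        pred_nsmul_sum_add_nsmul_sum y hm (by lia) hvn.le,
        pred_nsmul_sum_add_nsmul_sum y' hm (by lia) hvn.le, htail] at hcol
      exact add_left_cancel (add_left_cancel hcol)
    rw [← add_sum_Icc_add_one y hn, ← add_sum_Icc_add_one y' hn, htail] at hy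
    exact ⟨hx_eq, add_right_cancel hy, (forall_sum_Icc_add_one_eq_iff htail).1 hy_tail⟩
  · rintro ⟨hx_eq, -, hy_eq⟩
    have hx_sum (k : ℕ → ℕ) {a : ℕ} (ha : 1 ≤ a) :
        ∑ i ∈ Icc a m, k i • x i = ∑ i ∈ Icc a m, k i • x' i :=
      sum_congr rfl fun i hi ↦ by rw [hx_eq i (by grind) (by grind)]
    have hy_sum {a b : ℕ} (ha : 2 ≤ a) (hb : b ≤ n) :
        ∑ j ∈ Icc a b, y j = ∑ j ∈ Icc a b, y' j :=
      sum_congr rfl fun j hj ↦ hy_eq j (by grind) (by grind)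
    refine ⟨hy_sum le_rfl le_rfl, fun u _ _ ↦ ?_, fun v hv hvn ↦ ?_⟩
    · simpa [hy_sum le_rfl le_rfl] using hx_sum (fun _ ↦ 1) (a := u + 1) (by lia)
    · rw [hx_sum _ one_le_two, hy_sum le_rfl (by lia), hy_sum (by lia) le_rfl]

end Triangularity

section Arrays

variable {M : Type*} [AddCommMonoid M]

/-- The sum of row `i` of the array `A`, whose `n` columns are indexed by `1, …, n`. -/
def rowSum (A : ℕ → ℕ → M) (n i : ℕ) : M :=
  ∑ j ∈ Icc 1 n, A i j

/-- The sum of column `j` of the array `A`, whose `m` rows are indexed by `1, …, m`. -/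
def colSum (A : ℕ → ℕ → M) (m j : ℕ) : M :=
  ∑ i ∈ Icc 1 m, A i j

variable (A : ℕ → ℕ → M)

theorem sum_rowSum_eq_sum_colSum (m n : ℕ) :
    ∑ i ∈ Icc 1 m, rowSum A n i = ∑ j ∈ Icc 1 n, colSum A m j :=
  sum_comm

theorem rowSum_eq_add {n : ℕ} (hn : 1 ≤ n) (i : ℕ) :
    rowSum A n i = A i 1 + ∑ j ∈ Icc 2 n, A i j :=
  (add_sum_Icc_add_one (A i) hn).symm

theorem sum_rowSum_add_sum_colSum {m n u : ℕ} (hn : 1 ≤ n) (hu : u ≤ m) :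
    ∑ i ∈ Icc (u + 1) m, rowSum A n i + ∑ j ∈ Icc 2 n, colSum A m j
      = ∑ i ∈ Icc (u + 1) m, A i 1 + ∑ i ∈ Icc 1 u, ∑ j ∈ Icc 2 n, A i j
        + 2 • ∑ i ∈ Icc (u + 1) m, ∑ j ∈ Icc 2 n, A i j := by
  have hcol : ∑ j ∈ Icc 2 n, colSum A m j
      = ∑ i ∈ Icc 1 u, ∑ j ∈ Icc 2 n, A i j + ∑ i ∈ Icc (u + 1) m, ∑ j ∈ Icc 2 n, A i j := by
    rw [sum_Icc_consecutive _ (by lia) hu]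
    exact sum_comm
  simp only [hcol, rowSum_eq_add A hn, sum_add_distrib]
  abel

theorem weighted_sum_rowSum_add_sum_colSum {m n v : ℕ} (hm : 1 ≤ m) (hv : v + 1 ≤ n) :
    ∑ i ∈ Icc 2 m, (i - 1) • rowSum A n i
        + (m - 1) • ∑ j ∈ Icc 2 (v + 1), colSum A m j + m • ∑ j ∈ Icc (v + 2) n, colSum A m j
      = ∑ i ∈ Icc 2 m, (i - 1) • A i 1
        + (m - 1) • ∑ j ∈ Icc 2 (v + 1), A 1 j + m • ∑ j ∈ Icc (v + 2) n, A 1 j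
        + ∑ i ∈ Icc 1 (m - 1), ∑ j ∈ Icc 2 (v + 1), (i + m - 1) • A (i + 1) j
        + ∑ i ∈ Icc 1 (m - 1), ∑ j ∈ Icc (v + 2) n, (i + m) • A (i + 1) j := by
  obtain ⟨p, rfl⟩ := Nat.exists_eq_add_of_le' hm
  have hrow (i : ℕ) : rowSum A n i
      = A i 1 + (∑ j ∈ Icc 2 (v + 1), A i j + ∑ j ∈ Icc (v + 2) n, A i j) := by
    rw [rowSum_eq_add A (by lia), sum_Icc_consecutive (A i) (by lia) hv]
  have hcol (a b : ℕ) : ∑ j ∈ Icc a b, colSum A (p + 1) j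
      = ∑ j ∈ Icc a b, A 1 j + ∑ i ∈ Icc 1 p, ∑ j ∈ Icc a b, A (i + 1) j := by
    rw [← sum_Icc_add_right (fun i ↦ ∑ j ∈ Icc a b, A i j) 1 p 1,
      add_sum_Icc_add_one (fun i ↦ ∑ j ∈ Icc a b, A i j) (by lia)]
    exact sum_comm
  have hshift (f : ℕ → M) : ∑ i ∈ Icc 2 (p + 1), (i - 1) • f i = ∑ i ∈ Icc 1 p, i • f (i + 1) :=
    sum_Icc_add_right (fun i ↦ (i - 1) • f i) 1 p 1
  simp only [hshift]
  simp only [hrow, hcol, ← add_assoc, Nat.add_sub_cancel, add_smul, smul_add, one_smul,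
    sum_add_distrib, smul_sum]
  abel

end Arrays

section PartArray

theorem add_mul_pred_eq_mul (m : ℕ) {n : ℕ} (hn : 1 ≤ n) : m + m * (n - 1) = m * n := by
  obtain ⟨k, rfl⟩ := Nat.exists_eq_add_of_le' hn
  rw [Nat.add_sub_cancel]
  ring

variable {M : Type*}

/-- The parts `λ_1, …, λ_{mn}` arranged in an `m × n` array, with rows and columns indexed from
`1`: the first column is `λ_1, …, λ_m`, and the remaining parts fill the other `n - 1` columns row
by row. -/
def partArray (m n : ℕ) (lam : ℕ → M) (i j : ℕ) : M :=
  if j = 1 then lam i else lam (m + (i - 1) * (n - 1) + (j - 1))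

variable (m n : ℕ) (lam : ℕ → M)

theorem partArray_one (i : ℕ) : partArray m n lam i 1 = lam i :=
  if_pos rfl

variable [AddCommMonoid M]

theorem sum_partArray_add_one (i : ℕ) {a : ℕ} (ha : 1 ≤ a) (b : ℕ) :
    ∑ j ∈ Icc (a + 1) (b + 1), partArray m n lam (i + 1) j
      = ∑ j ∈ Icc a b, lam (m + i * (n - 1) + j) := by
  rw [sum_Icc_add_right]
  exact sum_congr rfl fun j hj ↦ if_neg (by grind)

variable {n}

theorem sum_partArray_tail {i : ℕ} (hn : 1 ≤ n) (hi : 1 ≤ i) :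
    ∑ j ∈ Icc 2 n, partArray m n lam i j
      = ∑ j ∈ Icc (m + (i - 1) * (n - 1) + 1) (m + i * (n - 1)), lam j := by
  obtain ⟨i, rfl⟩ := Nat.exists_eq_add_of_le' hi
  obtain ⟨k, rfl⟩ := Nat.exists_eq_add_of_le' hn
  simp only [sum_partArray_add_one m (k + 1) lam i le_rfl k, Nat.add_sub_cancel]
  rw [← sum_Icc_add_left, add_one_mul, ← add_assoc m]

theorem sum_sum_partArray_tail (hn : 1 ≤ n) {u w : ℕ} (huw : u ≤ w) :
    ∑ i ∈ Icc (u + 1) w, ∑ j ∈ Icc 2 n, partArray m n lam i j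
      = ∑ j ∈ Icc (m + u * (n - 1) + 1) (m + w * (n - 1)), lam j := by
  have hmono : Monotone fun i ↦ m + i * (n - 1) := fun i j hij ↦ by dsimp only; gcongr
  rw [← sum_Icc_sum_Icc_of_monotone lam hmono huw]
  exact sum_congr rfl fun i hi ↦ sum_partArray_tail m lam hn (by grind)

theorem rowSum_partArray {u : ℕ} (hn : 1 ≤ n) (hu : 1 ≤ u) :
    rowSum (partArray m n lam) n u
      = lam u + ∑ i ∈ Icc (m + (u - 1) * (n - 1) + 1) (m + u * (n - 1)), lam i := by
  rw [rowSum_eq_add _ hn, partArray_one, sum_partArray_tail m lam hn hu]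

theorem colSum_partArray_one : colSum (partArray m n lam) m 1 = ∑ i ∈ Icc 1 m, lam i :=
  sum_congr rfl fun i _ ↦ partArray_one m n lam i

theorem colSum_partArray {v : ℕ} (hv : 2 ≤ v) :
    colSum (partArray m n lam) m v = ∑ i ∈ range m, lam (m + (n - 1) * i + v - 1) := by
  rw [range_eq_Ico]
  refine (sum_Ico_add' (partArray m n lam · v) 0 m 1).symm.trans (sum_congr rfl fun i _ ↦ ?_)
  rw [partArray, if_neg (by lia), Nat.add_sub_cancel, mul_comm, Nat.add_sub_assoc (by lia)]

theorem sum_colSum_partArray_tail (hn : 1 ≤ n) :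
    ∑ j ∈ Icc 2 n, colSum (partArray m n lam) m j = ∑ i ∈ Icc (m + 1) (m * n), lam i := by
  have hblock := sum_sum_partArray_tail m lam hn m.zero_le
  rw [zero_mul, add_zero, add_mul_pred_eq_mul m hn] at hblock
  rw [← hblock]
  exact sum_comm

theorem sum_colSum_partArray (hn : 1 ≤ n) :
    ∑ j ∈ Icc 1 n, colSum (partArray m n lam) m j = ∑ i ∈ Icc 1 (m * n), lam i := by
  rw [← add_sum_Icc_add_one _ hn, colSum_partArray_one, sum_colSum_partArray_tail m lam hn,
    sum_Icc_consecutive lam (by lia) (by nlinarith)]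

theorem sum_rowSum_add_sum_colSum_partArray (hn : 1 ≤ n) {u : ℕ} (hu : u ≤ m) :
    ∑ i ∈ Icc (u + 1) m, rowSum (partArray m n lam) n i
        + ∑ j ∈ Icc 2 n, colSum (partArray m n lam) m j
      = ∑ i ∈ Icc (u + 1) (m + u * (n - 1)), lam i
        + 2 • ∑ i ∈ Icc (m + u * (n - 1) + 1) (m * n), lam i := by
  have hfirst : ∑ i ∈ Icc 1 u, ∑ j ∈ Icc 2 n, partArray m n lam i j
      = ∑ i ∈ Icc (m + 1) (m + u * (n - 1)), lam i := by
    simpa only [zero_mul, add_zero] using sum_sum_partArray_tail m lam hn u.zero_le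
  rw [sum_rowSum_add_sum_colSum _ hn hu, hfirst, sum_sum_partArray_tail m lam hn hu,
    add_mul_pred_eq_mul m hn]
  simp only [partArray_one]
  rw [sum_Icc_consecutive lam (by lia) (by lia)]

theorem weighted_sum_rowSum_add_sum_colSum_partArray (hm : 1 ≤ m) {v : ℕ} (hv : v + 1 ≤ n) :
    ∑ i ∈ Icc 2 m, (i - 1) • rowSum (partArray m n lam) n i
        + (m - 1) • ∑ j ∈ Icc 2 (v + 1), colSum (partArray m n lam) m j
        + m • ∑ j ∈ Icc (v + 2) n, colSum (partArray m n lam) m j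
      = ∑ i ∈ Icc 2 m, (i - 1) • lam i
        + (m - 1) • ∑ i ∈ Icc (m + 1) (m + v), lam i
        + m • ∑ i ∈ Icc (m + v + 1) (m + n - 1), lam i
        + ∑ i ∈ Icc 1 (m - 1), ∑ j ∈ Icc 1 v, (i + m - 1) • lam (m + i * (n - 1) + j)
        + ∑ i ∈ Icc 1 (m - 1), ∑ j ∈ Icc (v + 1) (n - 1), (i + m) • lam (m + i * (n - 1) + j) := by
  have hleft (i : ℕ) : ∑ j ∈ Icc 2 (v + 1), partArray m n lam (i + 1) j
      = ∑ j ∈ Icc 1 v, lam (m + i * (n - 1) + j) :=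
    sum_partArray_add_one m n lam i le_rfl v
  have hright (i : ℕ) : ∑ j ∈ Icc (v + 2) n, partArray m n lam (i + 1) j
      = ∑ j ∈ Icc (v + 1) (n - 1), lam (m + i * (n - 1) + j) := by
    simpa only [Nat.sub_add_cancel (show 1 ≤ n by lia)] using
      sum_partArray_add_one m n lam i (Nat.le_add_left 1 v) (n - 1)
  have hleft_one := hleft 0
  have hright_one := hright 0
  simp only [zero_mul, add_zero, zero_add, ← sum_Icc_add_left] at hleft_one hright_one
  rw [weighted_sum_rowSum_add_sum_colSum _ hm hv, hleft_one, hright_one,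
    Nat.add_sub_assoc (by lia : 1 ≤ n), add_assoc m v 1]
  simp only [partArray_one, ← smul_sum, hleft, hright]

end PartArray

theorem stability_system_equiv_general {M : Type*} [AddCancelCommMonoid M] {m n : ℕ}
    (hm : 1 ≤ m) (hn : 1 ≤ n) (lam mu nu : ℕ → M)
    (hmu : ∑ i ∈ Icc 1 m, mu i = ∑ i ∈ Icc 1 (m * n), lam i)
    (hnu : ∑ j ∈ Icc 1 n, nu j = ∑ i ∈ Icc 1 (m * n), lam i) :
    ((∑ j ∈ Icc 2 n, nu j = ∑ i ∈ Icc (m + 1) (m * n), lam i) ∧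
     (∀ u, 1 ≤ u → u ≤ m - 1 →
        ∑ i ∈ Icc (u + 1) m, mu i + ∑ j ∈ Icc 2 n, nu j
          = ∑ i ∈ Icc (u + 1) (m + u * (n - 1)), lam i
            + 2 • ∑ i ∈ Icc (m + u * (n - 1) + 1) (m * n), lam i) ∧
     (∀ v, 1 ≤ v → v ≤ n - 2 →
        ∑ i ∈ Icc 2 m, (i - 1) • mu i
            + (m - 1) • ∑ j ∈ Icc 2 (v + 1), nu j
            + m • ∑ j ∈ Icc (v + 2) n, nu j
          = ∑ i ∈ Icc 2 m, (i - 1) • lam i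
            + (m - 1) • ∑ i ∈ Icc (m + 1) (m + v), lam i
            + m • ∑ i ∈ Icc (m + v + 1) (m + n - 1), lam i
            + ∑ i ∈ Icc 1 (m - 1), ∑ j ∈ Icc 1 v,
                (i + m - 1) • lam (m + i * (n - 1) + j)
            + ∑ i ∈ Icc 1 (m - 1), ∑ j ∈ Icc (v + 1) (n - 1),
                (i + m) • lam (m + i * (n - 1) + j)))
    ↔ ((∀ u, 1 ≤ u → u ≤ m →
          mu u = lam u + ∑ i ∈ Icc (m + (u - 1) * (n - 1) + 1) (m + u * (n - 1)), lam i) ∧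
       (nu 1 = ∑ i ∈ Icc 1 m, lam i) ∧
       (∀ v, 2 ≤ v → v ≤ n →
          nu v = ∑ i ∈ range m, lam (m + (n - 1) * i + v - 1))) := by
  have hcol_total := sum_colSum_partArray m lam hn
  have hrow_total := (sum_rowSum_eq_sum_colSum (partArray m n lam) m n).trans hcol_total
  refine Iff.trans (and_congr ?_ (and_congr (forall₃_congr fun u _ hu ↦ ?_)
      (forall₃_congr fun v _ hv ↦ ?_)))
    ((linear_forms_eq_iff_forall_eq hm hn (hmu.trans hrow_total.symm)
      (hnu.trans hcol_total.symm)).trans (and_congr (forall₃_congr fun u hu _ ↦ ?_)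
        (and_congr ?_ (forall₃_congr fun v hv _ ↦ ?_))))
  · rw [sum_colSum_partArray_tail m lam hn]
  · rw [sum_rowSum_add_sum_colSum_partArray m lam hn (by lia)]
  · rw [weighted_sum_rowSum_add_sum_colSum_partArray m lam hm (by lia)]
  · rw [rowSum_partArray m lam hn hu]
  · rw [colSum_partArray_one]
  · rw [colSum_partArray m lam hv]

/-- Proposition 5.2: for partitions `λ, μ, ν` of the same positive integer `N` with at most
`mn, m, n` parts (indexed here from 1, padded with zeros), the system of `m + n - 2` equations
`b^{m,n}(λ,μ,ν; Id) = 0` holds if and only if each part of `μ` and `ν` is the indicated sum of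
parts of `λ`. -/
theorem stability_system_equiv (m n N : ℕ) (hm : 1 ≤ m) (hn : 1 ≤ n) (hN : 0 < N)
    (lam mu nu : ℕ → ℕ)
    (hlam : ∀ i, 1 ≤ i → i < m * n → lam (i + 1) ≤ lam i)
    (hmu : ∀ i, 1 ≤ i → i < m → mu (i + 1) ≤ mu i)
    (hnu : ∀ j, 1 ≤ j → j < n → nu (j + 1) ≤ nu j)
    (hlamN : ∑ i ∈ Finset.Icc 1 (m * n), lam i = N)
    (hmuN : ∑ i ∈ Finset.Icc 1 m, mu i = N)
    (hnuN : ∑ j ∈ Finset.Icc 1 n, nu j = N) :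
    ((∑ j ∈ Finset.Icc 2 n, nu j = ∑ i ∈ Finset.Icc (m + 1) (m * n), lam i) ∧
     (∀ u, 1 ≤ u → u ≤ m - 1 →
        ∑ i ∈ Finset.Icc (u + 1) m, mu i + ∑ j ∈ Finset.Icc 2 n, nu j
          = ∑ i ∈ Finset.Icc (u + 1) (m + u * (n - 1)), lam i
            + 2 * ∑ i ∈ Finset.Icc (m + u * (n - 1) + 1) (m * n), lam i) ∧
     (∀ v, 1 ≤ v → v ≤ n - 2 →
        ∑ i ∈ Finset.Icc 2 m, (i - 1) * mu i
            + (m - 1) * ∑ j ∈ Finset.Icc 2 (v + 1), nu j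
            + m * ∑ j ∈ Finset.Icc (v + 2) n, nu j
          = ∑ i ∈ Finset.Icc 2 m, (i - 1) * lam i
            + (m - 1) * ∑ i ∈ Finset.Icc (m + 1) (m + v), lam i
            + m * ∑ i ∈ Finset.Icc (m + v + 1) (m + n - 1), lam i
            + ∑ i ∈ Finset.Icc 1 (m - 1), ∑ j ∈ Finset.Icc 1 v,
                (i + m - 1) * lam (m + i * (n - 1) + j)
            + ∑ i ∈ Finset.Icc 1 (m - 1), ∑ j ∈ Finset.Icc (v + 1) (n - 1),
                (i + m) * lam (m + i * (n - 1) + j)))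
    ↔ ((∀ u, 1 ≤ u → u ≤ m →
          mu u = lam u + ∑ i ∈ Finset.Icc (m + (u - 1) * (n - 1) + 1) (m + u * (n - 1)), lam i) ∧
       (nu 1 = ∑ i ∈ Finset.Icc 1 m, lam i) ∧
       (∀ v, 2 ≤ v → v ≤ n →
          nu v = ∑ i ∈ Finset.range m, lam (m + (n - 1) * i + v - 1))) := by
  simpa only [smul_eq_mul] using stability_system_equiv_general hm hn lam mu nu
    (hmuN.trans hlamN.symm) (hnuN.trans hlamN.symm)
end

section
/- Let A be a d × K matrix with integer entries satisfying ker(A) ∩ ℝ^K_{≥0} = {0}, let c be its j-th column, and let A' be the matrix obtained from A by replacing its j-th column by a vector c' ∈ ℤ^d, where A' also satisfies ker(A') ∩ ℝ^K_{≥0} = {0}. If the number of x ∈ ℕ^K with A' x = c is at least the number of x ∈ ℕ^K with A x = c, then for every b ∈ ℤ^d with nonnegative entries, the number of x ∈ ℕ^K with A' x = b is at least the number of x ∈ ℕ^K with A x = b. -/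
/-!
Suppose `c`, the `j`-th column of `A`, is a combination `A' y` of the new columns. In a solution `x`
of `A x = b`, trade the `x j` copies of `c` for `x j` copies of `y`: the result solves `A' x' = b`.
If `y j ≠ 0`, then `x j` can be read off `x' j = x j * y j`, and then so can the rest of `x`, so the
trade is injective.

A `y` with `y j ≠ 0` exists unless `A' y = c` has infinitely many solutions: otherwise every
solution of `A' y = c` would also solve `A y = c`, which moreover has the solution `e_j`, so `c`
would have strictly fewer representations by `A'` than by `A`. In the infinite case a single `x`
with `x j ≠ 0` already yields infinitely many solutions of `A' x' = b`, since the last copy of `c`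
can be traded for any `y`.
-/

open Function

section LinearCombination

variable {ι R M : Type*} [Fintype ι] [DecidableEq ι] [Semiring R] [AddCommMonoid M] [Module R M]

theorem linearCombination_update_of_apply_eq_zero (v : ι → M) {j : ι} (c : M) {x : ι → R}
    (hx : x j = 0) :
    Fintype.linearCombination R (update v j c) x = Fintype.linearCombination R v x := by
  simp only [Fintype.linearCombination_apply]
  refine Finset.sum_congr rfl fun k _ => ?_
  obtain rfl | hk := eq_or_ne k j
  · simp only [hx, zero_smul]
  · rw [update_of_ne hk]

theorem linearCombination_eq_linearCombination_update_zero_add (v : ι → M) (j : ι) (x : ι → R) :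
    Fintype.linearCombination R v x =
      Fintype.linearCombination R v (update x j 0) + x j • v j := by
  have hx : x = update x j 0 + Pi.single j (x j) := by
    ext k
    obtain rfl | hk := eq_or_ne k j <;> simp [*]
  conv_lhs => rw [hx]
  rw [map_add, Fintype.linearCombination_apply_single]

end LinearCombination

theorem injective_update_zero_add_nsmul {ι : Type*} [DecidableEq ι] {j : ι} {y : ι → ℕ}
    (hy : y j ≠ 0) :
    Injective fun x : ι → ℕ => update x j 0 + x j • y := by
  intro x z hxz
  have apply_eq (k : ι) : update x j 0 k + x j * y k = update z j 0 k + z j * y k :=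
    congrFun hxz k
  have hj : x j = z j := by
    simpa [hy] using apply_eq j
  ext k
  obtain rfl | hk := eq_or_ne k j
  · exact hj
  · simpa [hk, hj] using apply_eq k

section VectorPartitions

variable {ι M : Type*} [Fintype ι] [AddCommMonoid M]

/-- The vector partitions of `b` into the parts `v k`, a partition being recorded by its
multiplicities: `x k` is the number of times `v k` is used. When `v` is the family of columns of a
matrix `A`, these are the `x ∈ ℕ^K` with `A x = b`, and their number is the vector partition
function `p_A(b)`. -/
def vectorPartitions (v : ι → M) (b : M) : Set (ι → ℕ) :=
  {x | Fintype.linearCombination ℕ v x = b}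

theorem mem_vectorPartitions {v : ι → M} {b : M} {x : ι → ℕ} :
    x ∈ vectorPartitions v b ↔ Fintype.linearCombination ℕ v x = b :=
  Iff.rfl

theorem add_mem_vectorPartitions {v : ι → M} {b c : M} {x y : ι → ℕ}
    (hx : x ∈ vectorPartitions v b) (hy : y ∈ vectorPartitions v c) :
    x + y ∈ vectorPartitions v (b + c) := by
  rw [mem_vectorPartitions] at *
  rw [map_add, hx, hy]

theorem nsmul_mem_vectorPartitions {v : ι → M} {b : M} {x : ι → ℕ}
    (hx : x ∈ vectorPartitions v b) (n : ℕ) : n • x ∈ vectorPartitions v (n • b) := by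
  rw [mem_vectorPartitions] at *
  rw [map_nsmul, hx]

theorem infinite_vectorPartitions_nsmul {v : ι → M} {b : M} (hb : (vectorPartitions v b).Infinite)
    {n : ℕ} (hn : n ≠ 0) : (vectorPartitions v (n • b)).Infinite := by
  obtain ⟨m, rfl⟩ := Nat.exists_eq_succ_of_ne_zero hn
  obtain ⟨y, hy⟩ := hb.nonempty
  refine Set.infinite_of_injOn_mapsTo (add_right_injective (m • y)).injOn (fun z hz => ?_) hb
  rw [succ_nsmul]
  exact add_mem_vectorPartitions (nsmul_mem_vectorPartitions hy m) hz

variable [DecidableEq ι]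

theorem single_mem_vectorPartitions (v : ι → M) (j : ι) :
    Pi.single j 1 ∈ vectorPartitions v (v j) := by
  rw [mem_vectorPartitions, Fintype.linearCombination_apply_single, one_smul]

theorem mem_vectorPartitions_update_iff {v : ι → M} {j : ι} {b c : M} {x : ι → ℕ} (hx : x j = 0) :
    x ∈ vectorPartitions (update v j c) b ↔ x ∈ vectorPartitions v b := by
  rw [mem_vectorPartitions, mem_vectorPartitions, linearCombination_update_of_apply_eq_zero v c hx]

theorem update_zero_add_mem_vectorPartitions_update {v : ι → M} {j : ι} {b c : M} {x y : ι → ℕ}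
    (hx : x ∈ vectorPartitions v b) (hy : y ∈ vectorPartitions (update v j c) (x j • v j)) :
    update x j 0 + y ∈ vectorPartitions (update v j c) b := by
  rw [mem_vectorPartitions] at *
  rw [map_add, linearCombination_update_of_apply_eq_zero v c (update_self j 0 x), hy,
    ← linearCombination_eq_linearCombination_update_zero_add, hx]

theorem encard_vectorPartitions_le_update_of_apply_ne_zero {v : ι → M} {j : ι} {c : M} {y : ι → ℕ}
    (hy : y ∈ vectorPartitions (update v j c) (v j)) (hyj : y j ≠ 0) (b : M) :
    (vectorPartitions v b).encard ≤ (vectorPartitions (update v j c) b).encard :=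
  Set.encard_le_encard_of_injOn
    (fun x hx => update_zero_add_mem_vectorPartitions_update hx
      (nsmul_mem_vectorPartitions hy (x j)))
    (injective_update_zero_add_nsmul hyj).injOn

theorem encard_vectorPartitions_le_update_of_infinite {v : ι → M} {j : ι} {c : M}
    (hinf : (vectorPartitions (update v j c) (v j)).Infinite) (b : M) :
    (vectorPartitions v b).encard ≤ (vectorPartitions (update v j c) b).encard := by
  by_cases hzero : ∀ x ∈ vectorPartitions v b, x j = 0
  · exact Set.encard_le_encard fun x hx => (mem_vectorPartitions_update_iff (hzero x hx)).2 hx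
  · push Not at hzero
    obtain ⟨x, hx, hxj⟩ := hzero
    have hinf_b : (vectorPartitions (update v j c) b).Infinite :=
      Set.infinite_of_injOn_mapsTo (add_right_injective (update x j 0)).injOn
        (fun y hy => update_zero_add_mem_vectorPartitions_update hx hy)
        (infinite_vectorPartitions_nsmul hinf hxj)
    exact hinf_b.encard_eq ▸ le_top

theorem exists_apply_ne_zero_of_encard_le_of_finite {v : ι → M} {j : ι} {c : M}
    (hle : (vectorPartitions v (v j)).encard ≤ (vectorPartitions (update v j c) (v j)).encard)
    (hfin : (vectorPartitions (update v j c) (v j)).Finite) :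
    ∃ y ∈ vectorPartitions (update v j c) (v j), y j ≠ 0 := by
  by_contra! hzero
  have hsub : vectorPartitions (update v j c) (v j) ⊆ vectorPartitions v (v j) :=
    fun y hy => (mem_vectorPartitions_update_iff (hzero y hy)).1 hy
  have hsingle : Pi.single j 1 ∉ vectorPartitions (update v j c) (v j) := fun h => by
    simpa using hzero _ h
  have hssub : vectorPartitions (update v j c) (v j) ⊂ vectorPartitions v (v j) :=
    (Set.ssubset_iff_of_subset hsub).2 ⟨_, single_mem_vectorPartitions v j, hsingle⟩
  exact (hfin.encard_lt_encard hssub).not_ge hle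

theorem column_replacement_monotone_general (v : ι → M) (j : ι) (c : M)
    (hle : (vectorPartitions v (v j)).encard ≤ (vectorPartitions (update v j c) (v j)).encard)
    (b : M) :
    (vectorPartitions v b).encard ≤ (vectorPartitions (update v j c) b).encard := by
  by_cases hfin : (vectorPartitions (update v j c) (v j)).Finite
  · obtain ⟨y, hy, hyj⟩ := exists_apply_ne_zero_of_encard_le_of_finite hle hfin
    exact encard_vectorPartitions_le_update_of_apply_ne_zero hy hyj b
  · exact encard_vectorPartitions_le_update_of_infinite hfin b

end VectorPartitions

-- Two comparable partitions of `b` differ by a partition of `0`, so the partitions of `b` form an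
-- antichain in `ι → ℕ`; by Dickson's lemma it is finite.
theorem finite_vectorPartitions {ι M : Type*} [Fintype ι] [AddCancelCommMonoid M] {v : ι → M}
    (hv : ∀ x ∈ vectorPartitions v 0, x = 0) (b : M) : (vectorPartitions v b).Finite := by
  have hanti : IsAntichain (· ≤ ·) (vectorPartitions v b) := by
    intro x hx y hy hne hle
    obtain ⟨z, rfl⟩ := exists_add_of_le hle
    rw [mem_vectorPartitions] at hx hy
    rw [map_add, hx, add_eq_left] at hy
    exact hne (by rw [hv z hy, add_zero])
  exact hanti.finite_of_partiallyWellOrderedOn (Set.isPWO_of_wellQuasiOrderedLE _)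

section Matrix

variable {m n : Type*}

theorem col_updateCol {R : Type*} [DecidableEq n] (A : Matrix m n R) (j : n) (c : m → R) :
    (A.updateCol j c).col = update A.col j c := by
  ext k i
  obtain rfl | hk := eq_or_ne k j <;> simp [*]

variable [Fintype n]

theorem mem_vectorPartitions_col {R : Type*} [NonAssocSemiring R] {A : Matrix m n R} {b : m → R}
    {x : n → ℕ} : x ∈ vectorPartitions A.col b ↔ A.mulVec (fun k => (x k : R)) = b := by
  have hmulVec : A.mulVec (fun k => (x k : R)) = Fintype.linearCombination ℕ A.col x := by
    ext i
    simp [Matrix.mulVec, dotProduct, Fintype.linearCombination_apply, Nat.cast_comm]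
  rw [mem_vectorPartitions, hmulVec]

theorem finite_vectorPartitions_col {A : Matrix m n ℤ}
    (hker : ∀ x : n → ℝ, (∀ k, 0 ≤ x k) → (A.map (Int.cast : ℤ → ℝ)).mulVec x = 0 → x = 0)
    (b : m → ℤ) : (vectorPartitions A.col b).Finite := by
  refine finite_vectorPartitions (fun x hx => ?_) b
  rw [mem_vectorPartitions_col] at hx
  have hx_real : (A.map (Int.cast : ℤ → ℝ)).mulVec (fun k => (x k : ℝ)) = 0 := by
    ext i
    simpa [hx, comp_def] using
      (RingHom.map_mulVec (Int.castRingHom ℝ) A (fun k => (x k : ℤ)) i).symm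
  ext k
  have hxk : (x k : ℝ) = 0 := congrFun (hker _ (fun k => Nat.cast_nonneg (x k)) hx_real) k
  exact_mod_cast hxk

theorem coe_natCard_mulVec_eq_encard_vectorPartitions {A : Matrix m n ℤ}
    (hker : ∀ x : n → ℝ, (∀ k, 0 ≤ x k) → (A.map (Int.cast : ℤ → ℝ)).mulVec x = 0 → x = 0)
    (b : m → ℤ) :
    (Nat.card {x : n → ℕ // A.mulVec (fun k => (x k : ℤ)) = b} : ℕ∞) =
      (vectorPartitions A.col b).encard := by
  simp only [← mem_vectorPartitions_col]
  exact (finite_vectorPartitions_col hker b).cast_ncard_eq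

end Matrix

/-- Proposition 6.1 (column-replacement monotonicity): let `A'` be obtained from `A` by
replacing its `j`-th column by `c'`, where both `A` and `A'` satisfy
`ker ∩ ℝ^K_{≥0} = {0}`. If `p_{A'}(c) ≥ p_A(c)` for `c` the `j`-th column of `A`, then
`p_{A'}(b) ≥ p_A(b)` for every `b ∈ ℤ^d` with nonnegative entries. -/
theorem column_replacement_monotone (d K : ℕ) (A : Matrix (Fin d) (Fin K) ℤ)
    (j : Fin K) (c' : Fin d → ℤ)
    (hkerA : ∀ x : Fin K → ℝ, (∀ k, 0 ≤ x k) →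
      (A.map (Int.cast : ℤ → ℝ)).mulVec x = 0 → x = 0)
    (hkerA' : ∀ x : Fin K → ℝ, (∀ k, 0 ≤ x k) →
      ((A.updateCol j c').map (Int.cast : ℤ → ℝ)).mulVec x = 0 → x = 0)
    (hc : Nat.card {x : Fin K → ℕ // A.mulVec (fun k => (x k : ℤ)) = fun i => A i j} ≤
          Nat.card {x : Fin K → ℕ //
            (A.updateCol j c').mulVec (fun k => (x k : ℤ)) = fun i => A i j})
    (b : Fin d → ℤ) (hb : ∀ i, 0 ≤ b i) :
    Nat.card {x : Fin K → ℕ // A.mulVec (fun k => (x k : ℤ)) = b} ≤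
      Nat.card {x : Fin K → ℕ //
        (A.updateCol j c').mulVec (fun k => (x k : ℤ)) = b} := by
  rw [← Nat.cast_le (α := ℕ∞), coe_natCard_mulVec_eq_encard_vectorPartitions hkerA,
    coe_natCard_mulVec_eq_encard_vectorPartitions hkerA', col_updateCol] at hc ⊢
  exact column_replacement_monotone_general A.col j c' hc b
end

section
/- Let A be a d × K matrix with nonnegative integer entries in which every standard basis vector e_1, …, e_d of ℕ^d appears as a column, and suppose f : {1,…,K} → {1,…,d} is a map such that A_{f(j), j} > 0 for every column index j (in particular f is surjective). For each 1 ≤ i ≤ d set m_i = #{j : f(j) = i}. Then for every b ∈ ℕ^d, the number of x ∈ ℕ^K with A x = b is at most Π_{i=1}^{d} C(b_i + m_i − 1, m_i − 1), where C(·,·) denotes a binomial coefficient. -/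
open Finset

/-!
Let `B` be the matrix whose `j`-th column is the basis vector `e_{f j}`, so that `B ≤ A`, and let
`C` place the `i`-th coordinate at a column of `A` equal to `e_i`, so that `A C = 1 = B C`. If
`A x = b`, then `B x ≤ b`, and adding the slack back along `C` gives a solution
`x + C (b - B x)` of `B y = b`. This map is injective: applying `A` to its value gives
`b + (b - B x)`, which determines the slack and hence `x`. So `B y = b` has at least as many
solutions as `A x = b`, and since it splits into one equation `∑ y_j = b_i` for each fibre of `f`,
its solutions are counted by stars and bars.
-/

section SlackCompletion

variable {m n R : Type*} [Fintype n] [Semiring R] {A B : Matrix m n R} {C : Matrix n m R}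
  {b : m → R}

lemma mulVec_le_mulVec_of_le [PartialOrder R] [CanonicallyOrderedAdd R] [IsOrderedRing R]
    (hBA : ∀ i j, B i j ≤ A i j) (x : n → R) : B.mulVec x ≤ A.mulVec x :=
  fun i ↦ sum_le_sum fun j _ ↦ mul_le_mul_of_nonneg_right (hBA i j) zero_le

variable [Sub R]

/-- The correction of a vector `x` with `B x ≤ b` to a solution of `B y = b`, obtained by adding
the slack `b - B x` along a right inverse `C` of `B`. The subtraction is meant to be the truncated
one of a canonically ordered semiring. -/
def slackCompletion [Fintype m] (B : Matrix m n R) (C : Matrix n m R) (b : m → R) (x : n → R) :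
    n → R :=
  x + C.mulVec (b - B.mulVec x)

lemma mulVec_slackCompletion [Fintype m] [DecidableEq m] (hAC : A * C = 1) (x : n → R) :
    A.mulVec (slackCompletion B C b x) = A.mulVec x + (b - B.mulVec x) := by
  rw [slackCompletion, Matrix.mulVec_add, Matrix.mulVec_mulVec, hAC, Matrix.one_mulVec]

lemma slackCompletion_injOn [Fintype m] [DecidableEq m] [IsCancelAdd R] (hAC : A * C = 1) :
    Set.InjOn (slackCompletion B C b) {x | A.mulVec x = b} := by
  intro x (hx : A.mulVec x = b) y (hy : A.mulVec y = b) hxy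
  have slack_eq : b - B.mulVec x = b - B.mulVec y := by
    have h := congrArg A.mulVec hxy
    rwa [mulVec_slackCompletion hAC, mulVec_slackCompletion hAC, hx, hy, add_right_inj] at h
  rwa [slackCompletion, slackCompletion, slack_eq, add_left_inj] at hxy

variable [PartialOrder R] [CanonicallyOrderedAdd R] [IsOrderedRing R] [OrderedSub R]

lemma slackCompletion_mapsTo [Fintype m] [DecidableEq m] (hBA : ∀ i j, B i j ≤ A i j)
    (hBC : B * C = 1) :
    Set.MapsTo (slackCompletion B C b) {x | A.mulVec x = b} {y | B.mulVec y = b} := by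
  intro x (hx : A.mulVec x = b)
  have hBx : B.mulVec x ≤ b := hx ▸ mulVec_le_mulVec_of_le hBA x
  exact (mulVec_slackCompletion hBC x).trans (add_tsub_cancel_of_le hBx)

lemma natCard_mulVec_eq_le_of_le [Finite m] [DecidableEq m] [IsCancelAdd R]
    (hBA : ∀ i j, B i j ≤ A i j) (hAC : A * C = 1) (hBC : B * C = 1)
    [Finite {y : n → R // B.mulVec y = b}] :
    Nat.card {x : n → R // A.mulVec x = b} ≤ Nat.card {y : n → R // B.mulVec y = b} := by
  have := Fintype.ofFinite m
  have mapsTo := slackCompletion_mapsTo (b := b) hBA hBC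
  exact Nat.card_le_card_of_injective _ (mapsTo.restrict_inj.mpr (slackCompletion_injOn hAC))

end SlackCompletion

section SelectionMatrix

variable {m n R : Type*} [DecidableEq m] [Semiring R]

/-- The matrix whose `j`-th column is the standard basis vector `e_{f j}`. It serves both as the
reduction of a matrix to one chosen entry per column and as the embedding of coordinates along `f`.
-/
def selectionMatrix (R : Type*) [Semiring R] (f : n → m) : Matrix m n R :=
  (1 : Matrix m m R).submatrix id f

lemma selectionMatrix_apply (f : n → m) (i : m) (j : n) :
    selectionMatrix R f i j = if f j = i then 1 else 0 := by
  simp [selectionMatrix, Matrix.one_apply, eq_comm]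

lemma mul_selectionMatrix {l : Type*} [Fintype m] (M : Matrix l m R) (f : n → m) :
    M * selectionMatrix R f = M.submatrix id f :=
  Matrix.mul_submatrix_one (Equiv.refl m) f M

lemma selectionMatrix_le [PartialOrder R] [CanonicallyOrderedAdd R] {f : n → m}
    {A : Matrix m n R} (hf : ∀ j, 1 ≤ A (f j) j) (i : m) (j : n) :
    selectionMatrix R f i j ≤ A i j := by
  rw [selectionMatrix_apply]
  split_ifs with hij
  · exact hij ▸ hf j
  · exact zero_le

lemma selectionMatrix_mulVec_apply [Fintype n] (f : n → m) (x : n → R) (i : m) :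
    (selectionMatrix R f).mulVec x i = ∑ j : {j // f j = i}, x j := by
  simp only [Matrix.mulVec, dotProduct, selectionMatrix_apply, ite_mul, one_mul, zero_mul]
  rw [← sum_filter, sum_subtype (p := fun j ↦ f j = i) _ (by simp)]

/-- The system `selectionMatrix R f *ᵥ x = b` splits over the fibres of `f`: a solution is a family
of vectors, one on each fibre, with coordinate sums prescribed by `b`. -/
def selectionMatrixSolutionsEquiv [Fintype n] (f : n → m) (b : m → R) :
    {x : n → R // (selectionMatrix R f).mulVec x = b} ≃
      ∀ i, {y : {j // f j = i} → R // ∑ j, y j = b i} :=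
  let restrictToFibers : (n → R) ≃ ∀ i, {j // f j = i} → R :=
    ((Equiv.sigmaFiberEquiv f).symm.arrowCongr (Equiv.refl R)).trans (Equiv.piCurry fun _ _ ↦ R)
  (restrictToFibers.subtypeEquiv fun x ↦ by
    simp [restrictToFibers, funext_iff, selectionMatrix_mulVec_apply, Sigma.curry]).trans
    Equiv.subtypePiEquivPi

end SelectionMatrix

section Counting

variable {m n : Type*} [DecidableEq m] [Fintype n]

instance finite_sum_eq (k : ℕ) : Finite {y : n → ℕ // ∑ j, y j = k} := by
  classical exact Finite.of_equiv _ (Sym.equivNatSumOfFintype n k)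

lemma natCard_sum_eq (k : ℕ) :
    Nat.card {y : n → ℕ // ∑ j, y j = k} = (Fintype.card n).multichoose k := by
  classical
  rw [← Nat.card_congr (Sym.equivNatSumOfFintype n k), Sym.natCard_sym_eq_multichoose,
    Nat.card_eq_fintype_card]

instance finite_selectionMatrix_mulVec_eq [Finite m] (f : n → m) (b : m → ℕ) :
    Finite {x : n → ℕ // (selectionMatrix ℕ f).mulVec x = b} :=
  Finite.of_equiv _ (selectionMatrixSolutionsEquiv f b).symm

lemma natCard_selectionMatrix_mulVec_eq [Fintype m] (f : n → m) (b : m → ℕ) :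
    Nat.card {x : n → ℕ // (selectionMatrix ℕ f).mulVec x = b} =
      ∏ i, (#{j | f j = i}).multichoose (b i) := by
  simp_rw [Nat.card_congr (selectionMatrixSolutionsEquiv f b), Nat.card_pi, natCard_sum_eq,
    Fintype.card_subtype]

lemma multichoose_eq_choose_sub_one {a : ℕ} (ha : 0 < a) (k : ℕ) :
    a.multichoose k = (k + a - 1).choose (a - 1) := by
  rw [Nat.multichoose_eq, Nat.add_comm a k]
  exact Nat.choose_symm_of_eq_add (by lia)

end Counting

theorem vpf_binomial_bound_general {m n : Type*} [Fintype m] [DecidableEq m] [Fintype n]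
    (A : Matrix m n ℕ) (hbasis : ∀ i, ∃ j, (fun i' => A i' j) = Pi.single i 1)
    (f : n → m) (hf : ∀ j, 0 < A (f j) j) (b : m → ℕ) :
    Nat.card {x : n → ℕ // A.mulVec x = b} ≤
      ∏ i, Nat.choose (b i + #{j | f j = i} - 1) (#{j | f j = i} - 1) := by
  classical
  choose c hc using hbasis
  have hAc : A.submatrix id c = 1 := by
    ext i k
    simpa [Matrix.one_apply, Pi.single_apply] using congrFun (hc k) i
  have hfc (i : m) : f (c i) = i := by
    by_contra hne
    exact (hf (c i)).ne' (by simpa [hne] using congrFun (hc i) (f (c i)))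
  have hAC : A * selectionMatrix ℕ c = 1 := by rw [mul_selectionMatrix, hAc]
  have hBC : selectionMatrix ℕ f * selectionMatrix ℕ c = 1 := by
    ext i k
    simp [mul_selectionMatrix, selectionMatrix_apply, hfc, Matrix.one_apply, eq_comm]
  have hfiber (i : m) : 0 < #{j | f j = i} := card_pos.mpr ⟨c i, by simp [hfc]⟩
  calc Nat.card {x : n → ℕ // A.mulVec x = b}
      ≤ Nat.card {y : n → ℕ // (selectionMatrix ℕ f).mulVec y = b} :=
        natCard_mulVec_eq_le_of_le (selectionMatrix_le hf) hAC hBC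
    _ = ∏ i, (#{j | f j = i}).multichoose (b i) := natCard_selectionMatrix_mulVec_eq f b
    _ = ∏ i, Nat.choose (b i + #{j | f j = i} - 1) (#{j | f j = i} - 1) :=
        prod_congr rfl fun i _ ↦ multichoose_eq_choose_sub_one (hfiber i) (b i)

/-- The general binomial upper bound for vector partition functions (underlying Theorem 6.5):
if `A` has nonnegative integer entries, every standard basis vector appears as a column, and
`f` chooses for each column `j` an index `f j` with `A (f j) j > 0`, then with
`m_i = #{j : f j = i}` we have `p_A(b) ≤ Π_i C(b_i + m_i - 1, m_i - 1)`. -/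
theorem vpf_binomial_bound (d K : ℕ) (A : Matrix (Fin d) (Fin K) ℕ)
    (hbasis : ∀ i : Fin d, ∃ j : Fin K, (fun i' => A i' j) = Pi.single i 1)
    (f : Fin K → Fin d) (hf : ∀ j : Fin K, 0 < A (f j) j)
    (b : Fin d → ℕ) :
    Nat.card {x : Fin K → ℕ // A.mulVec x = b} ≤
      ∏ i : Fin d,
        Nat.choose (b i + (Finset.univ.filter fun j => f j = i).card - 1)
          ((Finset.univ.filter fun j => f j = i).card - 1) :=
  vpf_binomial_bound_general A hbasis f hf b
end

section
/- For every b = (b_1, b_2, b_3) ∈ ℕ³, the number of vectors x ∈ ℕ^{11} with A^{2,3} x = b is at most C(b_1 + 5, 5) · C(b_2 + 3, 3), where C(·,·) denotes a binomial coefficient. -/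
/-- The matrix `A^{2,3}` (over `ℕ`), whose columns are
`(1,0,0), (0,1,0), (0,0,1), (1,0,1), (0,1,1), (0,1,1), (0,1,2), (1,1,1), (1,1,2), (1,2,2), (1,2,3)`. -/
def A23n : Matrix (Fin 3) (Fin 11) ℕ :=
  !![1, 0, 0, 1, 0, 0, 0, 1, 1, 1, 1;
     0, 1, 0, 0, 1, 1, 1, 1, 1, 2, 2;
     0, 0, 1, 1, 1, 1, 2, 1, 2, 2, 3]

/-!
Choose a set `P` of linearly independent columns: a solution of `A x = b` is determined by its
coordinates outside `P`. Assign to every other column a row in which its entry is nonzero, hence at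
least `1`. The coordinates assigned to row `i` then have sum at most `b i`, and by stars and bars
`c` natural numbers with sum at most `n` can be chosen in `C(n + c, c)` ways. For `A^{2,3}`, take
`P` to be the three unit columns and assign to each other column its first nonzero row.
-/

open Finset Matrix

section StarsAndBars

variable (ι : Type*) [Fintype ι]

/-- Vectors of sum at most `n` correspond to vectors of sum exactly `n` with one more coordinate,
the slack, stored at `none`. -/
def sumLEEquivOptionSumEq (n : ℕ) :
    {y : ι → ℕ // ∑ j, y j ≤ n} ≃ {z : Option ι → ℕ // ∑ j, z j = n} where
  toFun y := ⟨fun j => j.elim (n - ∑ j, y.1 j) y.1, by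
    simpa [Fintype.sum_option] using Nat.sub_add_cancel y.2⟩
  invFun z := ⟨fun j => z.1 (some j),
    (Nat.le_add_left _ _).trans_eq ((Fintype.sum_option z.1).symm.trans z.2)⟩
  left_inv _ := rfl
  right_inv := by
    rintro ⟨z, rfl⟩
    ext (_ | j)
    · simp [Fintype.sum_option]
    · rfl

instance finite_sum_le (n : ℕ) : Finite {y : ι → ℕ // ∑ j, y j ≤ n} := by
  classical
  exact .of_equiv _ ((Sym.equivNatSumOfFintype (Option ι) n).trans
    (sumLEEquivOptionSumEq ι n).symm)

theorem card_sum_le (n : ℕ) :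
    Nat.card {y : ι → ℕ // ∑ j, y j ≤ n} =
      (n + Fintype.card ι).choose (Fintype.card ι) := by
  classical
  calc Nat.card {y : ι → ℕ // ∑ j, y j ≤ n}
      = Nat.card (Sym (Option ι) n) :=
        Nat.card_congr ((sumLEEquivOptionSumEq ι n).trans
          (Sym.equivNatSumOfFintype (Option ι) n).symm)
    _ = (Fintype.card ι + n).choose n := by
        rw [Nat.card_eq_fintype_card, Sym.card_sym_eq_choose, Fintype.card_option,
          Nat.add_right_comm, Nat.add_sub_cancel]
    _ = (n + Fintype.card ι).choose (Fintype.card ι) := by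
        rw [add_comm, Nat.choose_symm_add]

end StarsAndBars

section VectorPartitions

variable {I J : Type*} [Fintype J]

theorem sum_le_mulVec_apply (A : Matrix I J ℕ) (x : J → ℕ) {i : I} {s : Finset J}
    (hs : ∀ j ∈ s, A i j ≠ 0) : ∑ j ∈ s, x j ≤ (A *ᵥ x) i :=
  calc ∑ j ∈ s, x j
      ≤ ∑ j ∈ s, A i j * x j :=
        sum_le_sum fun j hj => Nat.le_mul_of_pos_left _ (Nat.pos_of_ne_zero (hs j hj))
    _ ≤ ∑ j, A i j * x j := sum_le_univ_sum_of_nonneg fun _ => Nat.zero_le _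

theorem eq_of_mulVec_eq_of_linearIndepOn_col {R : Type*} [CommSemiring R] [IsCancelAdd R]
    {A : Matrix I J R} {P : Finset J} (hP : LinearIndepOn R A.col (P : Set J)) {x y : J → R}
    (hA : A *ᵥ x = A *ᵥ y) (hxy : ∀ j ∉ P, x j = y j) : x = y := by
  classical
  have hsum : ∑ j ∈ P, x j • A.col j = ∑ j ∈ P, y j • A.col j := by
    have hcompl : ∑ j ∈ Pᶜ, x j • A.col j = ∑ j ∈ Pᶜ, y j • A.col j :=
      sum_congr rfl fun j hj => by rw [hxy j (mem_compl.mp hj)]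
    have mulVec_eq (z : J → R) :
        A *ᵥ z = ∑ j ∈ P, z j • A.col j + ∑ j ∈ Pᶜ, z j • A.col j := by
      simp only [mulVec_eq_sum, op_smul_eq_smul, sum_add_sum_compl, col]
    rw [mulVec_eq, mulVec_eq, hcompl] at hA
    exact add_right_cancel hA
  funext j
  by_cases hj : j ∈ P
  · exact linearIndepOn_finset_iffₛ.mp hP x y hsum j hj
  · exact hxy j hj

theorem card_mulVec_eq_le_prod_choose [Fintype I] [DecidableEq I] [DecidableEq J]
    {A : Matrix I J ℕ} {P : Finset J} (hP : LinearIndepOn ℕ A.col (P : Set J))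
    {row : J → I} (hrow : ∀ j ∉ P, A (row j) j ≠ 0) (b : I → ℕ) :
    Nat.card {x : J → ℕ // A *ᵥ x = b} ≤
      ∏ i, (b i + #{j ∈ Pᶜ | row j = i}).choose #{j ∈ Pᶜ | row j = i} := by
  have hsum (x : {x : J → ℕ // A *ᵥ x = b}) (i : I) :
      ∑ j : {j ∈ Pᶜ | row j = i}, x.1 j ≤ b i := by
    rw [sum_coe_sort _ x.1, ← congrFun x.2 i]
    refine sum_le_mulVec_apply A x.1 fun j hj => ?_
    obtain ⟨hjP, rfl⟩ := mem_filter.mp hj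
    exact hrow j (mem_compl.mp hjP)
  let restrict (x : {x : J → ℕ // A *ᵥ x = b}) (i : I) :
      {y : {j ∈ Pᶜ | row j = i} → ℕ // ∑ j, y j ≤ b i} := ⟨fun j => x.1 j, hsum x i⟩
  have restrict_injective : Function.Injective restrict := fun x y hxy =>
    Subtype.ext <| eq_of_mulVec_eq_of_linearIndepOn_col hP (x.2.trans y.2.symm) fun j hj =>
      congrFun (congrArg Subtype.val (congrFun hxy (row j))) ⟨j, by simp [hj]⟩
  simpa only [Nat.card_pi, card_sum_le, Fintype.card_coe] using
    Nat.card_le_card_of_injective restrict restrict_injective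

end VectorPartitions

theorem linearIndepOn_col_A23n :
    LinearIndepOn ℕ A23n.col (({0, 1, 2} : Finset (Fin 11)) : Set (Fin 11)) := by
  refine linearIndepOn_finset_iffₛ.mpr fun f g hfg => ?_
  have h0 := congrFun hfg 0
  have h1 := congrFun hfg 1
  have h2 := congrFun hfg 2
  simp_all [A23n]

/-- Theorem 6.5 for `m = 2, n = 3`: `p_{A^{2,3}}(b) ≤ C(b₁+5, 5) · C(b₂+3, 3)`. -/
theorem vpf_23_binomial_bound (b : Fin 3 → ℕ) :
    Nat.card {x : Fin 11 → ℕ // A23n.mulVec x = b} ≤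
      Nat.choose (b 0 + 5) 5 * Nat.choose (b 1 + 3) 3 := by
  let row : Fin 11 → Fin 3 := ![0, 1, 2, 0, 1, 1, 1, 0, 0, 0, 0]
  have hrow : ∀ j ∉ ({0, 1, 2} : Finset (Fin 11)), A23n (row j) j ≠ 0 := by decide
  have hcard : ∀ i, #{j ∈ ({0, 1, 2} : Finset (Fin 11))ᶜ | row j = i} = ![5, 3, 0] i := by decide
  have hbound := card_mulVec_eq_le_prod_choose linearIndepOn_col_A23n hrow b
  simp only [hcard] at hbound
  simpa [Fin.prod_univ_three] using hbound
end
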